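/- arXiv:0904.2792 — 9 statements merged into one kernel-verified Lean document; each statement's English description precedes it below -/
import Mathlib

section
/- For all n ≥ 1, the sum of the values of the largest fixed points over all permutations of [n] that have at least one fixed point equals d_{n+1}, the number of derangements of [n+1]. That is, α_n = d_{n+1}. -/
open Classical

noncomputable section

/-- `π` has at least one fixed point. -/
def hasFP {n : ℕ} (π : Equiv.Perm (Fin n)) : Prop := ∃ i, π i = i

/-- The set of (1-based) values of the fixed points of `π`, viewing a permutation of
`Fin n` as a permutation of `[n] = {1, …, n}` via `i ↦ i + 1`. -/
def fixVals {n : ℕ} (π : Equiv.Perm (Fin n)) : Set ℕ :=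
  {k | ∃ i : Fin n, π i = i ∧ (i : ℕ) + 1 = k}

/-- The largest fixed point `ℓ(π)` (in 1-based indexing). -/
def lfp {n : ℕ} (π : Equiv.Perm (Fin n)) : ℕ := sSup (fixVals π)

/-- The smallest fixed point `s(π)` (in 1-based indexing). -/
def sfp {n : ℕ} (π : Equiv.Perm (Fin n)) : ℕ := sInf (fixVals π)

/-- `d n` is the number of derangements of `[n]`. -/
def d (n : ℕ) : ℕ := Set.ncard {π : Equiv.Perm (Fin n) | ∀ i, π i ≠ i}

/-- `a n k` is the number of permutations of `[n]` with at least one fixed point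
whose largest fixed point equals `k`. -/
def a (n k : ℕ) : ℕ := Set.ncard {π : Equiv.Perm (Fin n) | hasFP π ∧ lfp π = k}

/-- `b n k` is the number of permutations of `[n]` with at least one fixed point
whose smallest fixed point equals `k`. -/
def b (n k : ℕ) : ℕ := Set.ncard {π : Equiv.Perm (Fin n) | hasFP π ∧ sfp π = k}

/-- `alpha n` is the sum of the largest fixed points over all non-derangements of `[n]`. -/
def alpha (n : ℕ) : ℕ :=
  ∑ π ∈ Finset.univ.filter (fun π : Equiv.Perm (Fin n) => hasFP π), lfp π

/-- `beta n` is the sum of the smallest fixed points over all non-derangements of `[n]`. -/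
def beta (n : ℕ) : ℕ :=
  ∑ π ∈ Finset.univ.filter (fun π : Equiv.Perm (Fin n) => hasFP π), sfp π

lemma key_card (n : ℕ) (j : Fin (n + 1)) :
    (Finset.univ.filter (fun π : Equiv.Perm (Fin n) =>
      ∀ i : Fin n, π i = i → (i : ℕ) < j)).card =
    (Finset.univ.filter (fun σ : Equiv.Perm (Fin (n + 1)) =>
      σ j = j ∧ ∀ i, σ i = i → i ≤ j)).card := by
  have img : ∀ (π : Equiv.Perm (Fin n)) (i : Fin n),
      π.extendDomain (finSuccAboveEquiv j) (j.succAbove i) = j.succAbove (π i) := by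
    intro π i
    have := π.extendDomain_apply_image (finSuccAboveEquiv j) i
    simpa only [finSuccAboveEquiv_apply] using this
  have hj : ∀ (π : Equiv.Perm (Fin n)), π.extendDomain (finSuccAboveEquiv j) j = j := by
    intro π
    exact π.extendDomain_apply_not_subtype _ (by simp)
  have lt_iff : ∀ i : Fin n, j.succAbove i ≤ j ↔ (i : ℕ) < j := by
    intro i
    rw [(lt_iff_le_and_ne.trans (and_iff_left (Fin.succAbove_ne j i))).symm,
      Fin.succAbove_lt_iff_castSucc_lt, Fin.lt_def]
    simp
  have iff : ∀ σ : Equiv.Perm (Fin (n+1)), ∀ π : Equiv.Perm (Fin n),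
      (σ j = j) → (∀ i, σ (j.succAbove i) = j.succAbove (π i)) →
      ((∀ i : Fin n, π i = i → (i : ℕ) < j) ↔ ∀ i, σ i = i → i ≤ j) := by
    intro σ π h1 h2
    constructor
    · intro h i hi
      rcases Fin.eq_self_or_eq_succAbove j i with rfl | ⟨k, rfl⟩
      · exact le_rfl
      · rw [lt_iff]
        apply h
        rw [h2] at hi
        exact Fin.succAbove_right_injective hi
    · intro h i hi
      rw [← lt_iff]
      apply h
      rw [h2, hi]
  refine Finset.card_bij (fun π _ => π.extendDomain (finSuccAboveEquiv j)) ?_ ?_ ?_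
  · intro π hπ
    simp only [Finset.mem_filter, Finset.mem_univ, true_and] at hπ ⊢
    exact ⟨hj π, (iff _ π (hj π) (img π)).1 hπ⟩
  · intro π _ π' _ h
    ext i
    have := congrArg (fun σ => σ (j.succAbove i)) h
    simp only [img] at this
    rw [Fin.succAbove_right_injective this]
  · intro σ hσ
    simp only [Finset.mem_filter, Finset.mem_univ, true_and] at hσ
    have hp : ∀ x, σ x ≠ j ↔ x ≠ j := by
      intro x
      rw [not_iff_not]
      conv_lhs => rw [← hσ.1]
      exact σ.injective.eq_iff
    let π : Equiv.Perm (Fin n) :=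
      (finSuccAboveEquiv j).symm.permCongr (σ.subtypePerm hp)
    have hπ : ∀ i, σ (j.succAbove i) = j.succAbove (π i) := by
      intro i
      have : (finSuccAboveEquiv j) (π i)
          = σ.subtypePerm hp ((finSuccAboveEquiv j) i) := by
        simp [π, Equiv.permCongr_apply]
      have := congrArg Subtype.val this
      simpa only [finSuccAboveEquiv_apply, Equiv.Perm.subtypePerm_apply] using this.symm
    refine ⟨π, ?_, ?_⟩
    · simp only [Finset.mem_filter, Finset.mem_univ, true_and]
      exact (iff σ π hσ.1 hπ).2 hσ.2
    · apply Equiv.ext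
      intro x
      rcases Fin.eq_self_or_eq_succAbove j x with rfl | ⟨k, rfl⟩
      · rw [hj, hσ.1]
      · rw [img, hπ]

lemma lfp_le_iff {n : ℕ} (π : Equiv.Perm (Fin n)) (j : ℕ) :
    lfp π ≤ j ↔ ∀ i : Fin n, π i = i → (i : ℕ) < j := by
  have bdd : BddAbove (fixVals π) := by
    refine ⟨n, ?_⟩
    rintro k ⟨i, _, rfl⟩
    exact i.2
  constructor
  · intro h i hi
    exact (le_csSup bdd ⟨i, hi, rfl⟩).trans h
  · intro h
    rcases (fixVals π).eq_empty_or_nonempty with h0 | h0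
    · simp [lfp, h0]
    · apply csSup_le h0
      rintro k ⟨i, hi, rfl⟩
      exact h i hi

lemma lfp_count {n : ℕ} (π : Equiv.Perm (Fin n)) :
    lfp π + (Finset.univ.filter (fun j : Fin (n + 1) =>
      ∀ i : Fin n, π i = i → (i : ℕ) < j)).card = n + 1 := by
  have h1 : lfp π < n + 1 := Nat.lt_succ_of_le ((lfp_le_iff π n).2 fun i _ => i.2)
  have : (Finset.univ.filter (fun j : Fin (n + 1) =>
      ∀ i : Fin n, π i = i → (i : ℕ) < j)) = Finset.Ici (⟨lfp π, h1⟩ : Fin (n+1)) := by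
    ext j
    simp [← lfp_le_iff, Fin.le_def]
  rw [this, Fin.card_Ici]
  simp only
  omega

lemma max_count {m : ℕ} (σ : Equiv.Perm (Fin m)) :
    (Finset.univ.filter (fun j : Fin m => σ j = j ∧ ∀ i, σ i = i → i ≤ j)).card
      + (if ∀ i, σ i ≠ i then 1 else 0) = 1 := by
  split_ifs with h
  · simp [h]
  · push Not at h
    obtain ⟨i, hi⟩ := h
    have hne : (Finset.univ.filter (fun j : Fin m => σ j = j)).Nonempty := ⟨i, by simp [hi]⟩
    have hm := Finset.max'_mem _ hne
    have hle := Finset.le_max' (Finset.univ.filter (fun j : Fin m => σ j = j))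
    rw [add_zero, Finset.card_eq_one]
    refine ⟨Finset.max' _ hne, ?_⟩
    ext j
    simp only [Finset.mem_filter, Finset.mem_univ, true_and, Finset.mem_singleton] at hm hle ⊢
    constructor
    · rintro ⟨h1, h2⟩
      exact le_antisymm (hle j h1) (h2 _ hm)
    · rintro rfl
      exact ⟨hm, hle⟩

theorem stmt0 (n : ℕ) (hn : 1 ≤ n) : alpha n = d (n + 1) := by
  have hA : alpha n = ∑ π : Equiv.Perm (Fin n), lfp π := by
    unfold alpha
    apply Finset.sum_subset (Finset.subset_univ _)
    intro π _ h
    simp only [Finset.mem_filter, Finset.mem_univ, true_and] at h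
    apply Nat.le_zero.1
    rw [lfp_le_iff]
    intro i hi
    exact absurd ⟨i, hi⟩ h
  have hD : d (n + 1) = ∑ σ : Equiv.Perm (Fin (n + 1)), if ∀ i, σ i ≠ i then 1 else 0 := by
    unfold d
    rw [Finset.sum_boole, Set.ncard_eq_toFinset_card']
    simp
  have h1 := Finset.sum_congr (rfl : (Finset.univ : Finset (Equiv.Perm (Fin n))) = _)
    (fun π _ => lfp_count π)
  have h2 := Finset.sum_congr (rfl : (Finset.univ : Finset (Equiv.Perm (Fin (n + 1)))) = _)
    (fun π _ => max_count π)
  rw [Finset.sum_add_distrib, ← hA] at h1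
  rw [Finset.sum_add_distrib, ← hD] at h2
  have h3 := Finset.sum_congr (rfl : (Finset.univ : Finset (Fin (n + 1))) = _)
    (fun j _ => key_card n j)
  simp only [Finset.card_filter] at h1 h2 h3
  rw [Finset.sum_comm] at h1 h2
  rw [h3] at h1
  simp only [Finset.sum_const, Finset.card_univ, Fintype.card_perm, Fintype.card_fin,
    smul_eq_mul, Nat.factorial_succ] at h1 h2
  rw [mul_comm] at h1
  omega
end
end

section
/- For all n ≥ 2 and 1 ≤ k ≤ n, a_{n,k} = d_{n-1} + Σ_{j=1}^{k-1} a_{n-1,j}. -/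
open Classical

noncomputable section

lemma aux_char {n k : ℕ} (hk : 1 ≤ k) (π : Equiv.Perm (Fin n)) :
    (hasFP π ∧ lfp π = k) ↔
      (∃ i : Fin n, π i = i ∧ (i : ℕ) + 1 = k) ∧ ∀ i : Fin n, π i = i → (i : ℕ) + 1 ≤ k := by
  have hb : BddAbove (fixVals π) := by
    refine ⟨n, ?_⟩
    rintro x ⟨i, -, rfl⟩
    exact i.2
  constructor
  · rintro ⟨⟨i, hi⟩, hl⟩
    have hne : (fixVals π).Nonempty := ⟨_, i, hi, rfl⟩
    have := Nat.sSup_mem hne hb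
    unfold lfp at hl
    rw [hl] at this
    refine ⟨this, fun j hj => ?_⟩
    rw [← hl]
    exact le_csSup hb ⟨j, hj, rfl⟩
  · rintro ⟨⟨i, hi, hik⟩, h⟩
    refine ⟨⟨i, hi⟩, ?_⟩
    refine IsGreatest.csSup_eq ⟨⟨i, hi, hik⟩, ?_⟩
    rintro x ⟨j, hj, rfl⟩
    exact h j hj

lemma aux_sum (m q : ℕ) :
    Set.ncard {σ : Equiv.Perm (Fin m) | ∀ i : Fin m, σ i = i → (i : ℕ) + 1 ≤ q}
      = d m + ∑ j ∈ Finset.Icc 1 q, a m j := by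
  induction q with
  | zero => simp [d]
  | succ q ih =>
    rw [Finset.sum_Icc_succ_top (by omega), ← add_assoc, ← ih]
    unfold a
    rw [← Set.ncard_union_eq]
    · congr 1
      ext σ
      simp only [Set.mem_union, Set.mem_setOf_eq]
      rw [aux_char (by omega)]
      constructor
      · intro h
        by_cases h' : ∃ i : Fin m, σ i = i ∧ (i : ℕ) + 1 = q + 1
        · exact Or.inr ⟨h', h⟩
        · left
          intro i hi
          have h1 := h i hi
          have h2 : (i : ℕ) + 1 ≠ q + 1 := fun h3 => h' ⟨i, hi, h3⟩
          omega
      · rintro (h | h) i hi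
        · have := h i hi
          omega
        · exact h.2 i hi
    · rw [Set.disjoint_left]
      intro σ h1 h2
      simp only [Set.mem_setOf_eq] at h1 h2
      rw [aux_char (by omega)] at h2
      obtain ⟨⟨i, hi, hq⟩, -⟩ := h2
      have := h1 i hi
      omega

lemma aux_bij (m : ℕ) (p : Fin (m + 1)) :
    a (m + 1) ((p : ℕ) + 1) =
      Set.ncard {σ : Equiv.Perm (Fin m) | ∀ i : Fin m, σ i = i → (i : ℕ) + 1 ≤ p} := by
  set f : Fin m ≃ {x : Fin (m + 1) // x ≠ p} := finSuccAboveEquiv p with hf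
  have fv : ∀ i, (f i : Fin (m + 1)) = p.succAbove i := fun i => rfl
  have E1 : ∀ (σ : Equiv.Perm (Fin m)) i,
      σ.extendDomain f (p.succAbove i) = p.succAbove (σ i) := by
    intro σ i
    rw [← fv, Equiv.Perm.extendDomain_apply_image, fv]
  have E2 : ∀ (σ : Equiv.Perm (Fin m)), σ.extendDomain f p = p := by
    intro σ
    exact Equiv.Perm.extendDomain_apply_not_subtype _ _ (by simp)
  symm
  unfold a
  refine Set.ncard_congr (fun σ _ => σ.extendDomain f) ?_ ?_ ?_
  · intro σ h
    simp only [Set.mem_setOf_eq] at h ⊢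
    rw [aux_char (by omega)]
    refine ⟨⟨p, E2 σ, rfl⟩, fun j hj => ?_⟩
    rcases Fin.eq_self_or_eq_succAbove p j with rfl | ⟨i, rfl⟩
    · exact le_rfl
    · rw [E1] at hj
      have h1 := h i (Fin.succAbove_right_injective hj)
      rw [Fin.succAbove_of_castSucc_lt _ _ (by rw [Fin.lt_def]; simp; omega)]
      simp; omega
  · intro σ τ _ _ h
    ext i
    have := congrArg (fun e => e (p.succAbove i)) h
    simp only [E1] at this
    rw [Fin.succAbove_right_injective this]
  · intro π h
    simp only [Set.mem_setOf_eq] at h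
    rw [aux_char (by omega)] at h
    obtain ⟨⟨i, hi, hip⟩, hmax⟩ := h
    have : i = p := Fin.ext (by omega)
    subst this
    have hs : ∀ x, (π x ≠ i) ↔ x ≠ i := by
      intro x
      rw [not_iff_not]
      constructor
      · intro hx
        exact π.injective (hx.trans hi.symm)
      · rintro rfl
        exact hi
    let σ : Equiv.Perm (Fin m) := f.symm.permCongr (π.subtypePerm hs)
    have hσ : ∀ j, i.succAbove (σ j) = π (i.succAbove j) := by
      intro j
      rw [← fv]
      simp [σ, Equiv.permCongr_apply, fv]
    refine ⟨σ, ?_, ?_⟩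
    · simp only [Set.mem_setOf_eq]
      intro j hj
      have h1 := hσ j
      rw [hj] at h1
      have h2 := hmax _ h1.symm
      by_contra hc
      rw [Fin.succAbove_of_le_castSucc _ _ (by rw [Fin.le_def]; simp; omega)] at h2
      simp at h2
      omega
    · apply Equiv.ext
      intro x
      rcases Fin.eq_self_or_eq_succAbove i x with rfl | ⟨j, rfl⟩
      · rw [E2, hi]
      · rw [E1, hσ]

theorem stmt3 (n k : ℕ) (hn : 2 ≤ n) (hk1 : 1 ≤ k) (hkn : k ≤ n) :
    a n k = d (n - 1) + ∑ j ∈ Finset.Icc 1 (k - 1), a (n - 1) j := by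
  obtain ⟨m, rfl⟩ : ∃ m, n = m + 1 := ⟨n - 1, by omega⟩
  obtain ⟨q, rfl⟩ : ∃ q, k = q + 1 := ⟨k - 1, by omega⟩
  have := aux_bij m ⟨q, by omega⟩
  simp only [Nat.add_sub_cancel]
  rw [← aux_sum]
  exact this
end
end

section
/- For all n ≥ 2 and 2 ≤ k ≤ n, the recurrence a_{n,k} = a_{n,k-1} + a_{n-1,k-1} holds. -/
open Classical

noncomputable section

theorem char_aux {n : ℕ} (π : Equiv.Perm (Fin n)) (j : ℕ) :
    (hasFP π ∧ lfp π = j + 1) ↔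
      (∃ i : Fin n, (i : ℕ) = j ∧ π i = i) ∧ ∀ i : Fin n, j < i → π i ≠ i := by
  have hb : BddAbove (fixVals π) := ⟨n, by rintro _ ⟨i, _, rfl⟩; exact i.2⟩
  constructor
  · rintro ⟨⟨i, hi⟩, h⟩
    have hm : lfp π ∈ fixVals π := Nat.sSup_mem ⟨_, i, hi, rfl⟩ hb
    rw [h] at hm
    obtain ⟨x, hx, hxj⟩ := hm
    refine ⟨⟨x, by omega, hx⟩, fun y hy hfy => ?_⟩
    have : (y : ℕ) + 1 ≤ lfp π := le_csSup hb ⟨y, hfy, rfl⟩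
    omega
  · rintro ⟨⟨i, rfl, hi⟩, h⟩
    refine ⟨⟨i, hi⟩, ?_⟩
    apply le_antisymm
    · refine csSup_le ⟨_, i, hi, rfl⟩ ?_
      rintro _ ⟨y, hy, rfl⟩
      by_contra hc
      exact h y (by omega) hy
    · exact le_csSup hb ⟨i, hi, rfl⟩

def tailFree (m j : ℕ) : Set (Equiv.Perm (Fin m)) := {σ | ∀ i : Fin m, j ≤ i → σ i ≠ i}

def insFix {m : ℕ} (p : Fin (m + 1)) (σ : Equiv.Perm (Fin m)) : Equiv.Perm (Fin (m + 1)) :=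
  (finSuccEquiv' p).symm.permCongr (Equiv.optionCongr σ)

theorem insFix_self {m : ℕ} (p : Fin (m + 1)) (σ : Equiv.Perm (Fin m)) :
    insFix p σ p = p := by
  simp [insFix, Equiv.permCongr_apply]

theorem insFix_succAbove {m : ℕ} (p : Fin (m + 1)) (σ : Equiv.Perm (Fin m)) (i : Fin m) :
    insFix p σ (p.succAbove i) = p.succAbove (σ i) := by
  simp [insFix, Equiv.permCongr_apply]

theorem insFix_inj {m : ℕ} (p : Fin (m + 1)) : Function.Injective (insFix p) := by
  intro σ τ h
  ext i
  have := congrArg (fun e => e (p.succAbove i)) h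
  simp only [insFix_succAbove] at this
  rw [Fin.succAbove_right_injective this]

theorem insFix_surj {m : ℕ} (p : Fin (m + 1)) (π : Equiv.Perm (Fin (m + 1))) (h : π p = p) :
    ∃ σ, insFix p σ = π := by
  refine ⟨Equiv.removeNone ((finSuccEquiv' p).permCongr π), ?_⟩
  have h2 := map_equiv_removeNone ((finSuccEquiv' p).permCongr π)
  rw [insFix, h2]
  have : ((finSuccEquiv' p).permCongr π) none = none := by simp [Equiv.permCongr_apply, h]
  rw [this]
  ext x
  simp [Equiv.permCongr_apply]

theorem a_eq_tail (m j : ℕ) (hj : j ≤ m) : a (m + 1) (j + 1) = (tailFree m j).ncard := by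
  let p : Fin (m + 1) := ⟨j, by omega⟩
  rw [a, ← Set.ncard_image_of_injective _ (insFix_inj p)]
  congr 1
  ext π
  rw [Set.mem_setOf_eq, char_aux]
  have key : ∀ i : Fin m, j < (p.succAbove i : ℕ) ↔ j ≤ i := by
    intro i
    simp only [Fin.succAbove, Fin.lt_def, p]
    split_ifs with h <;> simp at h ⊢ <;> omega
  constructor
  · rintro ⟨⟨i, hi, hf⟩, h⟩
    obtain rfl : i = p := Fin.ext hi
    obtain ⟨σ, rfl⟩ := insFix_surj _ π hf
    refine ⟨σ, fun x hx hσ => ?_, rfl⟩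
    exact h _ ((key x).2 hx) (by rw [insFix_succAbove, hσ])
  · rintro ⟨σ, hσ, rfl⟩
    refine ⟨⟨p, rfl, insFix_self p σ⟩, fun i hi hf => ?_⟩
    have hne : i ≠ p := by rintro rfl; exact lt_irrefl _ hi
    obtain ⟨x, rfl⟩ := Fin.exists_succAbove_eq hne
    rw [insFix_succAbove] at hf
    exact hσ x ((key x).1 hi) (Fin.succAbove_right_injective hf)

theorem tail_succ (m j : ℕ) :
    (tailFree m (j + 1)).ncard = (tailFree m j).ncard + a m (j + 1) := by
  rw [a, ← Set.ncard_union_eq _ (Set.toFinite _) (Set.toFinite _)]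
  · congr 1
    ext σ
    rw [Set.mem_union, Set.mem_setOf_eq, char_aux]
    constructor
    · intro h
      by_cases hc : ∃ i : Fin m, (i : ℕ) = j ∧ σ i = i
      · exact Or.inr ⟨hc, fun i hi => h i hi⟩
      · refine Or.inl fun i hi hf => ?_
        rcases hi.eq_or_lt with e | e
        · exact hc ⟨i, e.symm, hf⟩
        · exact h i e hf
    · rintro (h | h) i hi
      · exact h i (by omega)
      · exact h.2 i hi
  · rw [Set.disjoint_left]
    intro σ h1 h2
    rw [Set.mem_setOf_eq, char_aux] at h2
    obtain ⟨⟨i, hi, hf⟩, -⟩ := h2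
    exact h1 i hi.ge hf

theorem stmt4 (n k : ℕ) (hn : 2 ≤ n) (hk1 : 2 ≤ k) (hkn : k ≤ n) :
    a n k = a n (k - 1) + a (n - 1) (k - 1) := by
  obtain ⟨m, rfl⟩ : ∃ m, n = m + 1 := ⟨n - 1, by omega⟩
  obtain ⟨j, rfl⟩ : ∃ j, k = j + 2 := ⟨k - 2, by omega⟩
  change a (m + 1) (j + 1 + 1) = a (m + 1) (j + 1) + a m (j + 1)
  rw [a_eq_tail m (j + 1) (by omega), a_eq_tail m j (by omega), tail_succ]
end
end

section
/- For all n ≥ 1 and 1 ≤ k ≤ n, the number of permutations of [n] whose largest fixed point equals k is equal to the number of permutations of [n-1] in which none of k, k+1, ..., n-1 is a fixed point. That is, a_{n,k} = |{σ ∈ S_{n-1} : σ(j) ≠ j for all j with k ≤ j ≤ n-1}|. -/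
open Classical

noncomputable section

def extP {m : ℕ} (p : Fin (m+1)) (σ : Equiv.Perm (Fin m)) : Equiv.Perm (Fin (m+1)) :=
  ((finSuccEquiv' p).trans (Equiv.optionCongr σ)).trans (finSuccEquiv' p).symm

theorem extP_self {m : ℕ} (p : Fin (m+1)) (σ : Equiv.Perm (Fin m)) : extP p σ p = p := by
  simp [extP]

theorem extP_succAbove {m : ℕ} (p : Fin (m+1)) (σ : Equiv.Perm (Fin m)) (j : Fin m) :
    extP p σ (p.succAbove j) = p.succAbove (σ j) := by
  simp [extP]

theorem extP_inj {m : ℕ} (p : Fin (m+1)) : Function.Injective (extP p) := by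
  intro σ τ h
  ext j
  have := congrArg (fun e : Equiv.Perm (Fin (m+1)) => e (p.succAbove j)) h
  simp only [extP_succAbove] at this
  rw [Fin.succAbove_right_injective this]

theorem extP_surj {m : ℕ} (p : Fin (m+1)) (π : Equiv.Perm (Fin (m+1))) (h : π p = p) :
    ∃ σ, extP p σ = π := by
  have h1 : ∀ j, ∃ i, p.succAbove i = π (p.succAbove j) := by
    intro j
    apply Fin.exists_succAbove_eq
    intro h2
    exact Fin.succAbove_ne p j (π.injective (h2.trans h.symm))
  choose f hf using h1
  have hinj : Function.Injective f := by
    intro x y hxy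
    have : π (p.succAbove x) = π (p.succAbove y) := by rw [← hf, ← hf, hxy]
    exact Fin.succAbove_right_injective (π.injective this)
  refine ⟨Equiv.ofBijective f (Finite.injective_iff_bijective.mp hinj), ?_⟩
  apply Equiv.ext
  intro x
  rcases Fin.eq_self_or_eq_succAbove p x with rfl | ⟨j, rfl⟩
  · rw [extP_self, h]
  · rw [extP_succAbove, Equiv.ofBijective_apply, hf]

theorem lfp_iff {m : ℕ} (p : Fin (m+1)) (π : Equiv.Perm (Fin (m+1))) :
    (hasFP π ∧ lfp π = (p : ℕ) + 1) ↔ π p = p ∧ ∀ i, π i = i → i ≤ p := by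
  have hb : BddAbove (fixVals π) := ⟨m+1, by
    rintro x ⟨i, -, rfl⟩
    omega⟩
  constructor
  · rintro ⟨⟨i, hi⟩, h⟩
    have hm : sSup (fixVals π) ∈ fixVals π := Nat.sSup_mem ⟨_, i, hi, rfl⟩ hb
    change sSup (fixVals π) = _ at h
    constructor
    · rw [h] at hm
      obtain ⟨q, hq, hqp⟩ := hm
      have : q = p := Fin.ext (by omega)
      rwa [← this]
    · intro i hi
      have : (i : ℕ) + 1 ≤ sSup (fixVals π) := le_csSup hb ⟨i, hi, rfl⟩
      rw [Fin.le_def]; omega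
  · rintro ⟨h1, h2⟩
    refine ⟨⟨p, h1⟩, ?_⟩
    refine IsGreatest.csSup_eq ⟨⟨p, h1, rfl⟩, ?_⟩
    rintro x ⟨i, hi, rfl⟩
    have := h2 i hi
    rw [Fin.le_def] at this; omega

theorem stmt5 (n k : ℕ) (hn : 1 ≤ n) (hk1 : 1 ≤ k) (hkn : k ≤ n) :
    a n k = Set.ncard {σ : Equiv.Perm (Fin (n - 1)) |
      ∀ j : Fin (n - 1), k ≤ (j : ℕ) + 1 → σ j ≠ j} := by
  obtain ⟨m, rfl⟩ : ∃ m, n = m + 1 := ⟨n - 1, by omega⟩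
  obtain ⟨p, rfl⟩ : ∃ p : Fin (m+1), k = (p : ℕ) + 1 := ⟨⟨k - 1, by omega⟩, by simp; omega⟩
  change _ = Set.ncard {σ : Equiv.Perm (Fin m) | ∀ j : Fin m, (p : ℕ) + 1 ≤ (j : ℕ) + 1 → σ j ≠ j}
  rw [← Set.ncard_image_of_injective _ (extP_inj p)]
  unfold a
  congr 1
  ext π
  rw [Set.mem_setOf_eq, lfp_iff]
  have key : ∀ j : Fin m, p.succAbove j ≤ p ↔ (j : ℕ) < p := by
    intro j
    by_cases hj : (j : ℕ) < p
    · rw [Fin.succAbove_of_castSucc_lt _ _ (by simpa [Fin.lt_def] using hj)]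
      simp [Fin.le_def, hj, hj.le]
    · rw [Fin.succAbove_of_le_castSucc _ _ (by simpa [Fin.le_def] using hj)]
      simp only [Fin.le_def, Fin.val_succ]; omega
  constructor
  · rintro ⟨h1, h2⟩
    obtain ⟨σ, rfl⟩ := extP_surj p π h1
    refine ⟨σ, ?_, rfl⟩
    intro j hj hs
    have := (key j).1 (h2 _ (by rw [extP_succAbove, hs]))
    omega
  · rintro ⟨σ, hσ, rfl⟩
    refine ⟨extP_self p σ, ?_⟩
    intro i hi
    rcases Fin.eq_self_or_eq_succAbove p i with rfl | ⟨j, rfl⟩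
    · exact le_rfl
    · rw [extP_succAbove] at hi
      rw [key]
      by_contra hc
      exact hσ j (by omega) (Fin.succAbove_right_injective hi)
end
end

section
/- For all n ≥ 1, the number of pairs (π, i) where π is a permutation of [n] with at least one fixed point and i is an integer with 1 ≤ i ≤ ℓ(π), equals d_{n+1}, the number of derangements of [n+1]. -/
open Classical

noncomputable section

lemma aux_le_lfp {n : ℕ} (π : Equiv.Perm (Fin n)) (i : ℕ) :
    (hasFP π ∧ 1 ≤ i ∧ i ≤ lfp π) ↔ 1 ≤ i ∧ ∃ k : Fin n, π k = k ∧ i ≤ (k : ℕ) + 1 := by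
  have hb : BddAbove (fixVals π) := by
    refine ⟨n, ?_⟩
    rintro k ⟨i, _, rfl⟩
    exact i.2
  constructor
  · rintro ⟨⟨k, hk⟩, h1, h2⟩
    have hne : (fixVals π).Nonempty := ⟨_, k, hk, rfl⟩
    obtain ⟨m, hm, hm'⟩ := Nat.sSup_mem hne hb
    refine ⟨h1, m, hm, ?_⟩
    rw [hm']
    exact h2
  · rintro ⟨h1, k, hk, h2⟩
    exact ⟨⟨k, hk⟩, h1, h2.trans (le_csSup hb ⟨k, hk, rfl⟩)⟩

def auxG (n : ℕ) (j : Fin (n + 1)) : Finset (Equiv.Perm (Fin n)) :=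
  Finset.univ.filter fun π => ∀ k : Fin n, j ≤ k.castSucc → π k ≠ k

def auxF (n : ℕ) (j : Fin n) : Finset (Equiv.Perm (Fin n)) :=
  Finset.univ.filter fun π => π j = j ∧ ∀ k : Fin n, j < k → π k ≠ k

def auxE {n : ℕ} (j : Fin (n + 1)) (π : Equiv.Perm (Fin n)) : Equiv.Perm (Fin (n + 1)) :=
  π.extendDomain (finSuccAboveEquiv j)

lemma auxE_self {n : ℕ} (j : Fin (n + 1)) (π : Equiv.Perm (Fin n)) : auxE j π j = j := by
  apply Equiv.Perm.extendDomain_apply_not_subtype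
  simp

lemma auxE_succAbove {n : ℕ} (j : Fin (n + 1)) (π : Equiv.Perm (Fin n)) (k : Fin n) :
    auxE j π (j.succAbove k) = j.succAbove (π k) := 
  Equiv.Perm.extendDomain_apply_image π (finSuccAboveEquiv j) k

lemma aux_card (n : ℕ) (j : Fin (n + 1)) : (auxG n j).card = (auxF (n + 1) j).card := by
  apply Finset.card_bij (fun π _ => auxE j π)
  · intro π hπ
    simp only [auxG, auxF, Finset.mem_filter, Finset.mem_univ, true_and] at hπ ⊢
    refine ⟨auxE_self j π, fun k hk => ?_⟩
    rcases Fin.eq_self_or_eq_succAbove j k with rfl | ⟨m, rfl⟩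
    · exact absurd hk (lt_irrefl _)
    · rw [auxE_succAbove]
      intro h
      exact hπ m ((Fin.lt_succAbove_iff_le_castSucc _ _).1 hk) (Fin.succAbove_right_injective h)
  · intro π _ ρ _ h
    ext1 k
    apply Fin.succAbove_right_injective (p := j)
    rw [← auxE_succAbove, ← auxE_succAbove, h]
  · intro σ hσ
    simp only [auxF, Finset.mem_filter, Finset.mem_univ, true_and] at hσ
    obtain ⟨h1, h2⟩ := hσ
    have hne : ∀ k, ∃ m, j.succAbove m = σ (j.succAbove k) := by
      intro k
      apply Fin.exists_succAbove_eq
      intro h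
      exact Fin.succAbove_ne j k (σ.injective (h.trans h1.symm))
    choose f hf using hne
    have hinj : Function.Injective f := by
      intro x y hxy
      have := (hf x).symm.trans ((congrArg j.succAbove hxy).trans (hf y))
      exact Fin.succAbove_right_injective (σ.injective this)
    let π : Equiv.Perm (Fin n) := Equiv.ofBijective f (Finite.injective_iff_bijective.1 hinj)
    have hπ : ∀ k, j.succAbove (π k) = σ (j.succAbove k) := hf
    refine ⟨π, ?_, ?_⟩
    · simp only [auxG, Finset.mem_filter, Finset.mem_univ, true_and]
      intro k hk h
      apply h2 (j.succAbove k) ((Fin.lt_succAbove_iff_le_castSucc _ _).2 hk)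
      rw [← hπ, h]
    · ext1 k
      rcases Fin.eq_self_or_eq_succAbove j k with rfl | ⟨m, rfl⟩
      · rw [auxE_self, h1]
      · rw [auxE_succAbove, hπ]

lemma aux_d (n : ℕ) : d n + ∑ j, (auxF n j).card = n.factorial := by
  have hd : d n = (Finset.univ.filter fun π : Equiv.Perm (Fin n) => ∀ i, π i ≠ i).card := by
    rw [d, ← Set.ncard_coe_finset]
    simp
  have hF : ∑ j, (auxF n j).card
      = (Finset.univ.filter fun π : Equiv.Perm (Fin n) => ¬ ∀ i, π i ≠ i).card := by
    rw [← Finset.card_biUnion]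
    · congr 1
      ext π
      simp only [auxF, Finset.mem_biUnion, Finset.mem_filter, Finset.mem_univ, true_and]
      constructor
      · rintro ⟨j, hj, _⟩ h
        exact h j hj
      · intro h
        push Not at h
        have hne : (Finset.univ.filter fun i => π i = i).Nonempty := by
          obtain ⟨i, hi⟩ := h
          exact ⟨i, by simpa using hi⟩
        refine ⟨_, (Finset.mem_filter.1 (Finset.max'_mem _ hne)).2, fun k hk hk' => ?_⟩
        exact absurd (Finset.le_max' _ k (by simpa using hk')) (not_le.2 hk)
    · intro x _ y _ hxy
      rw [Function.onFun, Finset.disjoint_left]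
      intro π hx hy
      simp only [auxF, Finset.mem_filter, Finset.mem_univ, true_and] at hx hy
      rcases lt_or_gt_of_ne hxy with h | h
      · exact hx.2 _ h hy.1
      · exact hy.2 _ h hx.1
  rw [hd, hF, Finset.card_filter_add_card_filter_not]
  simp [Fintype.card_perm]

lemma aux_lhs (n : ℕ) :
    Set.ncard {p : Equiv.Perm (Fin n) × ℕ | hasFP p.1 ∧ 1 ≤ p.2 ∧ p.2 ≤ lfp p.1} =
      ∑ j : Fin n, ((auxG n j.castSucc)ᶜ).card := by
  rw [← Finset.card_sigma, ← Set.ncard_coe_finset]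
  symm
  apply Set.ncard_congr (fun (x : (_ : Fin n) × Equiv.Perm (Fin n)) _ => (x.2, (x.1 : ℕ) + 1))
  · rintro ⟨j, π⟩ h
    simp only [auxG, Finset.coe_sigma, Set.mem_sigma_iff, Finset.mem_coe, Finset.mem_univ,
      true_and, Finset.mem_compl, Finset.mem_filter] at h
    rw [Set.mem_setOf_eq, aux_le_lfp]
    push Not at h
    obtain ⟨k, hk, hk'⟩ := h
    refine ⟨by simp, k, hk', ?_⟩
    have : (j : ℕ) ≤ k := hk
    simpa using this
  · rintro ⟨j, π⟩ ⟨j', π'⟩ _ _ h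
    simp only [Prod.mk.injEq, add_left_inj] at h
    obtain ⟨rfl, h⟩ := h
    obtain rfl := Fin.ext h
    rfl
  · rintro ⟨π, i⟩ h
    rw [Set.mem_setOf_eq, aux_le_lfp] at h
    obtain ⟨h1, k, hk, h2⟩ := h
    simp only at h1 h2 hk
    refine ⟨⟨⟨i - 1, by omega⟩, π⟩, ?_, ?_⟩
    · simp only [auxG, Finset.coe_sigma, Set.mem_sigma_iff, Finset.mem_coe, Finset.mem_univ,
        true_and, Finset.mem_compl, Finset.mem_filter]
      intro h
      refine h k ?_ hk
      rw [Fin.le_def]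
      simp only [Fin.val_castSucc]
      omega
    · simp only [Prod.mk.injEq, true_and]
      omega

theorem stmt6 (n : ℕ) (hn : 1 ≤ n) :
    Set.ncard {p : Equiv.Perm (Fin n) × ℕ | hasFP p.1 ∧ 1 ≤ p.2 ∧ p.2 ≤ lfp p.1} =
      d (n + 1) := by
  have h1 := aux_d (n + 1)
  simp only [← aux_card] at h1
  rw [Fin.sum_univ_castSucc] at h1
  have h2 : (auxG n (Fin.last n)).card = n.factorial := by
    have : auxG n (Fin.last n) = Finset.univ := by
      ext π
      simp only [auxG, Finset.mem_filter, Finset.mem_univ, true_and, iff_true]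
      intro k hk
      exact absurd hk (not_le.2 (Fin.castSucc_lt_last k))
    rw [this]
    simp [Fintype.card_perm]
  have h3 : ∑ j : Fin n, ((auxG n j.castSucc)ᶜ).card + ∑ j : Fin n, (auxG n j.castSucc).card
      = n * n.factorial := by
    rw [← Finset.sum_add_distrib]
    simp [Finset.card_compl_add_card, Fintype.card_perm]
  rw [aux_lhs]
  rw [Nat.factorial_succ, add_mul, one_mul] at h1
  omega
end
end

section
/- For all n ≥ 1, the sum of the values of the smallest fixed points over all permutations of [n] that have at least one fixed point equals the number of permutations of [n+1] having at least two fixed points. That is, β_n = |E_{n+1}|. -/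
open Classical

noncomputable section

def insFP {n : ℕ} (p : Fin (n+1)) (π : Equiv.Perm (Fin n)) : Equiv.Perm (Fin (n+1)) :=
  π.extendDomain (finSuccAboveEquiv p)

theorem insFP_self {n : ℕ} (p : Fin (n+1)) (π : Equiv.Perm (Fin n)) : insFP p π p = p := by
  unfold insFP
  apply Equiv.Perm.extendDomain_apply_not_subtype
  simp

theorem insFP_above {n : ℕ} (p : Fin (n+1)) (π : Equiv.Perm (Fin n)) (i : Fin n) :
    insFP p π (p.succAbove i) = p.succAbove (π i) := by
  have := Equiv.Perm.extendDomain_apply_image π (finSuccAboveEquiv p) i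
  simpa [insFP, finSuccAboveEquiv_apply] using this

theorem insFP_fix {n : ℕ} (p : Fin (n+1)) (π : Equiv.Perm (Fin n)) (i : Fin n) :
    insFP p π (p.succAbove i) = p.succAbove i ↔ π i = i := by
  rw [insFP_above]; exact Fin.succAbove_right_injective.eq_iff

theorem insFP_inj {n : ℕ} (p : Fin (n+1)) : Function.Injective (insFP p) := by
  intro π τ h
  ext1 i
  have := insFP_above p π i
  rw [h, insFP_above] at this
  exact (Fin.succAbove_right_injective this).symm

theorem insFP_surj {n : ℕ} (p : Fin (n+1)) (σ : Equiv.Perm (Fin (n+1))) (h : σ p = p) :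
    ∃ π, insFP p π = σ := by
  have hs : ∀ x, σ x ≠ p ↔ x ≠ p := by
    intro x
    rw [not_iff_not]
    constructor
    · intro hx; exact σ.injective (hx.trans h.symm)
    · rintro rfl; exact h
  refine ⟨((finSuccAboveEquiv p).trans (σ.subtypePerm hs)).trans
    (finSuccAboveEquiv p).symm, ?_⟩
  ext1 x
  rcases Fin.eq_self_or_eq_succAbove p x with rfl | ⟨i, rfl⟩
  · rw [insFP_self, h]
  · rw [insFP_above]
    set y := (σ.subtypePerm hs) ((finSuccAboveEquiv p) i) with hy
    have h1 : p.succAbove ((finSuccAboveEquiv p).symm y) = y.1 := by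
      have := congrArg Subtype.val ((finSuccAboveEquiv p).apply_symm_apply y)
      simpa only [finSuccAboveEquiv_apply] using this
    have h2 : y.1 = σ (p.succAbove i) := by
      simp [hy, finSuccAboveEquiv_apply]
    exact h1.trans h2

theorem lt_sfp_iff {n : ℕ} (π : Equiv.Perm (Fin n)) (h : hasFP π) (k : ℕ) :
    k < sfp π ↔ ∀ i, π i = i → k ≤ (i : ℕ) := by
  obtain ⟨j, hj⟩ := h
  constructor
  · intro hk i hi
    have : sfp π ≤ (i : ℕ) + 1 := Nat.sInf_le ⟨i, hi, rfl⟩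
    omega
  · intro hk
    have : sfp π ∈ fixVals π := Nat.sInf_mem ⟨_, j, hj, rfl⟩
    obtain ⟨i, hi, he⟩ := this
    have := hk i hi
    omega

theorem sfp_le {n : ℕ} (π : Equiv.Perm (Fin n)) (h : hasFP π) : sfp π ≤ n := by
  obtain ⟨j, hj⟩ := h
  have : sfp π ≤ (j : ℕ) + 1 := Nat.sInf_le ⟨j, hj, rfl⟩
  omega

theorem card_lt_aux (n m : ℕ) (h : m ≤ n) :
    (Finset.univ.filter (fun k : Fin (n+1) => (k : ℕ) < m)).card = m := by
  rw [Fin.card_filter_val_lt]; omega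

theorem insFP_min {n : ℕ} (p : Fin (n+1)) (π : Equiv.Perm (Fin n))
    (h : ∀ i, π i = i → (p : ℕ) ≤ (i : ℕ)) (x : Fin (n+1)) (hx : insFP p π x = x) : p ≤ x := by
  rcases Fin.eq_self_or_eq_succAbove p x with rfl | ⟨i, rfl⟩
  · exact le_rfl
  · have := h i ((insFP_fix p π i).1 hx)
    rw [Fin.succAbove_of_le_castSucc _ _ (by simpa [Fin.le_def] using this), Fin.le_def]
    simp; omega

theorem stmt9 (n : ℕ) (hn : 1 ≤ n) :
    beta n = Set.ncard {π : Equiv.Perm (Fin (n + 1)) | ∃ i j, i ≠ j ∧ π i = i ∧ π j = j} := by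
  rw [Set.ncard_eq_toFinset_card']
  have h1 : beta n = ((Finset.univ.filter (fun π : Equiv.Perm (Fin n) => hasFP π)).sigma
      (fun π => Finset.univ.filter (fun k : Fin (n+1) => (k : ℕ) < sfp π))).card := by
    rw [Finset.card_sigma]
    refine Finset.sum_congr rfl fun π hπ => ?_
    rw [card_lt_aux _ _ (sfp_le π (Finset.mem_filter.1 hπ).2)]
  rw [h1]
  refine Finset.card_bij (fun x _ => insFP x.2 x.1) ?_ ?_ ?_
  · rintro ⟨π, p⟩ hx
    simp only [Finset.mem_sigma, Finset.mem_filter, Finset.mem_univ, true_and] at hx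
    obtain ⟨j, hj⟩ := hx.1
    rw [Set.mem_toFinset]
    exact ⟨p, p.succAbove j, (Fin.succAbove_ne p j).symm, insFP_self p π, (insFP_fix p π j).2 hj⟩
  · rintro ⟨π, p⟩ hx ⟨τ, q⟩ hy h
    simp only [Finset.mem_sigma, Finset.mem_filter, Finset.mem_univ, true_and] at hx hy
    simp only at h
    have hx2 := (lt_sfp_iff π hx.1 _).1 hx.2
    have hy2 := (lt_sfp_iff τ hy.1 _).1 hy.2
    have hpq : p = q := by
      apply le_antisymm
      · apply insFP_min p π hx2; rw [h]; exact insFP_self q τ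
      · apply insFP_min q τ hy2; rw [← h]; exact insFP_self p π
    subst hpq
    rw [insFP_inj p h]
  · intro σ hσ
    rw [Set.mem_toFinset] at hσ
    obtain ⟨i, j, hij, hi, hj⟩ := hσ
    obtain ⟨p, hp, hmin⟩ := WellFounded.has_min (wellFounded_lt (α := Fin (n+1)))
      {x | σ x = x} ⟨i, hi⟩
    obtain ⟨π, rfl⟩ := insFP_surj p σ hp
    have hF : hasFP π := by
      have : ∃ x, x ≠ p ∧ insFP p π x = x := by
        by_cases hip : i = p
        · exact ⟨j, fun h => hij (hip.trans h.symm), hj⟩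
        · exact ⟨i, hip, hi⟩
      obtain ⟨x, hxp, hx⟩ := this
      obtain ⟨y, rfl⟩ := Fin.exists_succAbove_eq hxp
      exact ⟨y, (insFP_fix p π y).1 hx⟩
    refine ⟨⟨π, p⟩, ?_, rfl⟩
    simp only [Finset.mem_sigma, Finset.mem_filter, Finset.mem_univ, true_and]
    refine ⟨hF, (lt_sfp_iff π hF _).2 fun y hy => ?_⟩
    by_contra hlt
    apply hmin _ ((insFP_fix p π y).2 hy)
    have hc : y.castSucc < p := by rw [Fin.lt_def]; simp; omega
    rw [Fin.succAbove_of_castSucc_lt _ _ hc]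
    exact hc
end
end

section
/- For all n ≥ 1, α_n + β_n = (n+1)·(n! - d_n), where α_n is the sum of the largest fixed points and β_n is the sum of the smallest fixed points over all permutations of [n] with at least one fixed point. -/
open Classical

noncomputable section

/-- conjugation by reversal -/
def cj {n : ℕ} (π : Equiv.Perm (Fin n)) : Equiv.Perm (Fin n) :=
  (Fin.revPerm.trans π).trans Fin.revPerm

lemma cj_apply {n : ℕ} (π : Equiv.Perm (Fin n)) (i : Fin n) :
    cj π i = (π i.rev).rev := rfl

lemma cj_cj {n : ℕ} (π : Equiv.Perm (Fin n)) : cj (cj π) = π := by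
  ext i; simp [cj_apply]

lemma cj_fix {n : ℕ} (π : Equiv.Perm (Fin n)) (i : Fin n) (h : π i = i) :
    cj π i.rev = i.rev := by
  simp [cj_apply, h]

lemma cj_has {n : ℕ} (π : Equiv.Perm (Fin n)) (h : hasFP π) : hasFP (cj π) := by
  obtain ⟨i, hi⟩ := h
  exact ⟨i.rev, cj_fix π i hi⟩

lemma lfp_add {n : ℕ} (π : Equiv.Perm (Fin n)) (h : hasFP π) :
    lfp π + sfp (cj π) = n + 1 := by
  have hb : BddAbove (fixVals π) := by
    refine ⟨n, ?_⟩
    rintro k ⟨i, -, rfl⟩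
    exact i.2
  have hne : (fixVals π).Nonempty := by
    obtain ⟨i, hi⟩ := h
    exact ⟨_, i, hi, rfl⟩
  have hne' : (fixVals (cj π)).Nonempty := by
    obtain ⟨i, hi⟩ := cj_has π h
    exact ⟨_, i, hi, rfl⟩
  obtain ⟨i, hi, hi2⟩ := Nat.sSup_mem hne hb
  obtain ⟨j, hj, hj2⟩ := Nat.sInf_mem hne'
  have h1 : sInf (fixVals (cj π)) ≤ (i.rev : ℕ) + 1 :=
    Nat.sInf_le ⟨i.rev, cj_fix π i hi, rfl⟩
  have h2 : (j.rev : ℕ) + 1 ≤ sSup (fixVals π) := by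
    refine le_csSup hb ⟨j.rev, ?_, rfl⟩
    have := cj_fix _ j hj
    rwa [cj_cj] at this
  unfold lfp sfp
  rw [Fin.val_rev] at h1 h2
  omega

lemma beta_eq (n : ℕ) : beta n =
    ∑ π ∈ Finset.univ.filter (fun π : Equiv.Perm (Fin n) => hasFP π), sfp (cj π) := by
  unfold beta
  refine Finset.sum_bij' (fun π _ => cj π) (fun π _ => cj π) ?_ ?_ ?_ ?_ ?_
  · intro π h
    simp only [Finset.mem_filter, Finset.mem_univ, true_and] at h ⊢
    exact cj_has π h
  · intro π h
    simp only [Finset.mem_filter, Finset.mem_univ, true_and] at h ⊢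
    exact cj_has π h
  · intro π _; exact cj_cj π
  · intro π _; exact cj_cj π
  · intro π _; simp only [cj_cj]

lemma card_has (n : ℕ) :
    (Finset.univ.filter (fun π : Equiv.Perm (Fin n) => hasFP π)).card + d n = n.factorial := by
  have h := Finset.card_filter_add_card_filter_not (s := (Finset.univ : Finset (Equiv.Perm (Fin n))))
    (fun π => hasFP π)
  rw [Finset.card_univ, Fintype.card_perm, Fintype.card_fin] at h
  rw [← h]
  congr 1
  unfold d
  rw [← Set.ncard_coe_finset]
  congr 1
  ext π
  simp [hasFP]

theorem stmt10 (n : ℕ) (hn : 1 ≤ n) :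
    ((alpha n : ℤ) + beta n) = (n + 1) * (n.factorial - d n) := by
  have h : alpha n + beta n = (n + 1) *
      (Finset.univ.filter (fun π : Equiv.Perm (Fin n) => hasFP π)).card := by
    rw [beta_eq, alpha, ← Finset.sum_add_distrib, Finset.sum_congr rfl
      (g := fun _ => n + 1), Finset.sum_const, smul_eq_mul, mul_comm]
    intro π hπ
    exact lfp_add π (Finset.mem_filter.1 hπ).2
  rw [← card_has n]
  push_cast
  rw [add_sub_cancel_right]
  exact_mod_cast h
end
end

section
/- For all n ≥ 1, β_n = (n+1)! + (-1)^n - 2(n+1)·d_n. (Here the identity is between integers, with β_n and d_n regarded as integers.) -/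
open Classical

noncomputable section

def NF (n k : ℕ) : ℕ :=
  (Finset.univ.filter (fun π : Equiv.Perm (Fin n) => ∀ i : Fin n, (i : ℕ) < k → π i ≠ i)).card

lemma d_eq (n : ℕ) : d n = numDerangements n := by
  rw [← card_derangements_fin_eq_numDerangements, d, ← Nat.card_coe_set_eq,
    ← Nat.card_eq_fintype_card]
  rfl

lemma NF_self (n : ℕ) : NF n n = d n := by
  rw [NF, d, Set.ncard_eq_toFinset_card']
  congr 1
  ext π
  simp

lemma NF_zero (n : ℕ) : NF n 0 = n.factorial := by
  simp [NF, Fintype.card_perm]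

lemma NF_fix (n : ℕ) (k : Fin (n + 1)) :
    (Finset.univ.filter (fun σ : Equiv.Perm (Fin (n + 1)) =>
      (∀ i : Fin (n + 1), (i : ℕ) < k → σ i ≠ i) ∧ σ k = k)).card = NF n k := by
  symm
  have him : ∀ (π : Equiv.Perm (Fin n)) (i : Fin n),
      π.extendDomain (finSuccAboveEquiv k) (k.succAbove i) = k.succAbove (π i) := by
    intro π i
    have := Equiv.Perm.extendDomain_apply_image π (finSuccAboveEquiv k) i
    exact this
  have hk : ∀ (π : Equiv.Perm (Fin n)), π.extendDomain (finSuccAboveEquiv k) k = k := by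
    intro π
    exact Equiv.Perm.extendDomain_apply_not_subtype π (finSuccAboveEquiv k) (by simp)
  have hlt : ∀ i : Fin n, ((k.succAbove i : Fin (n+1)) : ℕ) < k ↔ (i : ℕ) < k := by
    intro i
    rw [← Fin.lt_def, Fin.succAbove_lt_iff_castSucc_lt, Fin.lt_def]
    simp
  refine Finset.card_bij (fun π _ => π.extendDomain (finSuccAboveEquiv k)) ?_ ?_ ?_
  · intro π hπ
    simp only [Finset.mem_filter, Finset.mem_univ, true_and] at hπ ⊢
    refine ⟨fun i hi => ?_, hk π⟩
    obtain rfl | ⟨j, rfl⟩ := Fin.eq_self_or_eq_succAbove k i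
    · exact absurd hi (lt_irrefl _)
    · rw [him]
      intro h
      exact hπ j ((hlt j).1 hi) (Fin.succAbove_right_injective h)
  · intro π _ π' _ h
    exact Equiv.Perm.extendDomainHom_injective (finSuccAboveEquiv k) h
  · intro σ hσ
    simp only [Finset.mem_filter, Finset.mem_univ, true_and] at hσ
    obtain ⟨h1, h2⟩ := hσ
    have hs : ∀ x, σ x ≠ k ↔ x ≠ k := by
      intro x
      rw [not_iff_not]
      constructor
      · intro h; exact σ.injective (h.trans h2.symm)
      · rintro rfl; exact h2
    let π : Equiv.Perm (Fin n) :=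
      (finSuccAboveEquiv k).symm.permCongr (σ.subtypePerm hs)
    have hπ : ∀ i, k.succAbove (π i) = σ (k.succAbove i) := by
      intro i
      have : finSuccAboveEquiv k (π i) = σ.subtypePerm hs (finSuccAboveEquiv k i) := by
        simp [π, Equiv.permCongr_apply]
      exact congrArg Subtype.val this
    refine ⟨π, ?_, ?_⟩
    · simp only [Finset.mem_filter, Finset.mem_univ, true_and]
      intro i hi h
      apply h1 (k.succAbove i) ((hlt i).2 hi)
      rw [← hπ, h]
    · ext i
      obtain rfl | ⟨j, rfl⟩ := Fin.eq_self_or_eq_succAbove k i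
      · rw [hk, h2]
      · rw [him, hπ]

lemma NF_rec (n k : ℕ) (hk : k ≤ n) : NF (n + 1) k = NF (n + 1) (k + 1) + NF n k := by
  have h := NF_fix n ⟨k, by omega⟩
  simp only at h
  rw [← h, NF, NF, ← Finset.card_union_of_disjoint]
  · congr 1
    ext σ
    simp only [Finset.mem_filter, Finset.mem_univ, true_and, Finset.mem_union]
    constructor
    · intro h
      by_cases hf : σ ⟨k, by omega⟩ = ⟨k, by omega⟩
      · exact Or.inr ⟨h, hf⟩
      · refine Or.inl fun i hi => ?_
        rcases Nat.lt_succ_iff_lt_or_eq.1 hi with h' | h'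
        · exact h i h'
        · have : i = ⟨k, by omega⟩ := Fin.ext h'
          rw [this]; exact hf
    · rintro (h | h) i hi
      · exact h i (by omega)
      · exact h.1 i hi
  · rw [Finset.disjoint_left]
    intro σ h1 h2
    simp only [Finset.mem_filter, Finset.mem_univ, true_and] at h1 h2
    exact h1 _ (Nat.lt_succ_self k) h2.2

lemma NF_sum (n m : ℕ) (hm : m ≤ n + 1) :
    ∑ k ∈ Finset.range m, NF n k + NF (n + 1) m = (n + 1).factorial := by
  induction m with
  | zero => simp [NF_zero]
  | succ m ih =>
    have := NF_rec n m (by omega)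
    rw [Finset.sum_range_succ, ← ih (by omega)]
    omega

lemma sfp_card {n : ℕ} (π : Equiv.Perm (Fin n)) (h : hasFP π) :
    ((Finset.range n).filter (fun k => ∀ i : Fin n, (i : ℕ) < k → π i ≠ i)).card = sfp π := by
  have hne : (fixVals π).Nonempty := by
    obtain ⟨i, hi⟩ := h
    exact ⟨_, i, hi, rfl⟩
  obtain ⟨i, hi, hs⟩ := Nat.sInf_mem hne
  have : (Finset.range n).filter (fun k => ∀ i : Fin n, (i : ℕ) < k → π i ≠ i)
      = Finset.range (sfp π) := by
    ext k
    simp only [Finset.mem_filter, Finset.mem_range, sfp]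
    constructor
    · rintro ⟨_, h2⟩
      by_contra hc
      exact h2 i (by omega) hi
    · intro hk
      refine ⟨by have := i.2; omega, fun j hj hf => ?_⟩
      have : sInf (fixVals π) ≤ (j : ℕ) + 1 := Nat.sInf_le ⟨j, hf, rfl⟩
      omega
  rw [this, Finset.card_range]

lemma beta_eq_s12 (n : ℕ) : beta n + n * d n = ∑ k ∈ Finset.range n, NF n k := by
  have h1 : ∑ k ∈ Finset.range n, NF n k = ∑ π : Equiv.Perm (Fin n),
      ((Finset.range n).filter (fun k => ∀ i : Fin n, (i : ℕ) < k → π i ≠ i)).card := by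
    simp only [NF, Finset.card_filter]
    rw [Finset.sum_comm]
  rw [h1, ← Finset.sum_filter_add_sum_filter_not Finset.univ
    (fun π : Equiv.Perm (Fin n) => hasFP π)]
  congr 1
  · refine Finset.sum_congr rfl fun π hπ => ?_
    rw [sfp_card π (by simpa using hπ)]
  · rw [Finset.sum_congr rfl (g := fun _ => n), Finset.sum_const, smul_eq_mul, mul_comm]
    · congr 1
      rw [← NF_self, NF]
      congr 1
      ext π
      simp [hasFP]
    · intro π hπ
      simp only [Finset.mem_filter, Finset.mem_univ, true_and, hasFP, not_exists] at hπ
      rw [Finset.filter_true_of_mem, Finset.card_range]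
      intro k _ i _
      exact hπ i

theorem stmt12 (n : ℕ) (hn : 1 ≤ n) :
    (beta n : ℤ) = (n + 1).factorial + (-1) ^ n - 2 * (n + 1) * d n := by
  have h1 := beta_eq_s12 n
  have h2 := NF_sum n (n + 1) le_rfl
  rw [Finset.sum_range_succ, ← h1, NF_self, NF_self, d_eq (n + 1)] at h2
  have h3 := numDerangements_succ n
  rw [← d_eq n] at h3
  have h4 : ((beta n : ℤ) + n * d n + d n) + numDerangements (n + 1) = (n + 1).factorial := by
    exact_mod_cast h2
  rw [h3] at h4
  linarith
end
end

section
/- The limit as n → ∞ of β_n / (n+1)! equals 1 - 2/e, where β_n is the sum of the smallest fixed points over all permutations of [n] with at least one fixed point. -/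
open Classical

noncomputable section

def NN (n k : ℕ) : ℕ :=
  (Finset.univ.filter (fun π : Equiv.Perm (Fin n) => ∀ i : Fin n, (i : ℕ) < k → π i ≠ i)).card

theorem NN_zero (n : ℕ) : NN n 0 = n.factorial := by
  simp [NN, Fintype.card_perm]

theorem NN_self (n : ℕ) : NN n n = numDerangements n := by
  rw [← card_derangements_fin_eq_numDerangements, ← Set.toFinset_card]
  unfold NN
  congr 1
  ext π
  rw [Set.mem_toFinset]
  simp [derangements]

theorem NN_fix (n k : ℕ) (hk : k ≤ n) :
    (Finset.univ.filter (fun π : Equiv.Perm (Fin (n+1)) =>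
      (∀ i : Fin (n+1), (i : ℕ) < k → π i ≠ i) ∧
        π ⟨k, Nat.lt_succ_of_le hk⟩ = ⟨k, Nat.lt_succ_of_le hk⟩)).card = NN n k := by
  set p : Fin (n+1) := ⟨k, Nat.lt_succ_of_le hk⟩ with hp
  let f := finSuccAboveEquiv p
  symm
  unfold NN
  have himg : ∀ (σ : Equiv.Perm (Fin n)) (i : Fin n),
      σ.extendDomain f (p.succAbove i) = p.succAbove (σ i) := by
    intro σ i
    exact Equiv.Perm.extendDomain_apply_image σ f i
  refine Finset.card_bij (fun σ _ => σ.extendDomain f) ?_ ?_ ?_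
  · intro σ hσ
    simp only [Finset.mem_filter, Finset.mem_univ, true_and] at hσ ⊢
    refine ⟨?_, ?_⟩
    · intro i hi
      have hne : i ≠ p := by
        rintro rfl
        simp [hp] at hi
      obtain ⟨j, rfl⟩ := Fin.exists_succAbove_eq hne
      rw [himg]
      intro h
      have h2 := Fin.succAbove_right_injective h
      refine hσ j ?_ h2
      by_contra hj
      have : p ≤ j.castSucc := by
        rw [Fin.le_def]; simp [hp]; omega
      rw [Fin.succAbove_of_le_castSucc _ _ this] at hi
      simp at hi
      omega
    · exact Equiv.Perm.extendDomain_apply_not_subtype _ _ (by simp)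
  · intro σ _ τ _ h
    ext i
    have h1 := congrArg (fun g => g (p.succAbove i)) h
    simp only [himg] at h1
    rw [Fin.succAbove_right_injective h1]
  · intro π hπ
    simp only [Finset.mem_filter, Finset.mem_univ, true_and] at hπ
    obtain ⟨h1, h2⟩ := hπ
    have hmem : ∀ x, x ≠ p ↔ π x ≠ p := by
      intro x
      rw [not_iff_not]
      constructor
      · rintro rfl; exact h2
      · intro h; exact π.injective (h.trans h2.symm)
    let τ : Equiv.Perm {x // x ≠ p} := π.subtypePerm (fun x => (hmem x).symm)
    let σ : Equiv.Perm (Fin n) := (f.trans τ).trans f.symm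
    have hσ : ∀ i, p.succAbove (σ i) = π (p.succAbove i) := by
      intro i
      have : f (σ i) = τ (f i) := by simp [σ]
      exact congrArg Subtype.val this
    refine ⟨σ, ?_, ?_⟩
    · simp only [Finset.mem_filter, Finset.mem_univ, true_and]
      intro i hi h
      have h3 : p.succAbove i = i.castSucc := by
        apply Fin.succAbove_of_castSucc_lt
        rw [Fin.lt_def]; simpa [hp] using hi
      have h4 := hσ i
      rw [h, h3] at h4
      exact h1 i.castSucc (by simpa using hi) h4.symm
    · apply Equiv.ext
      intro x
      by_cases hx : x = p
      · subst hx
        rw [h2]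
        exact Equiv.Perm.extendDomain_apply_not_subtype _ _ (by simp)
      · obtain ⟨j, rfl⟩ := Fin.exists_succAbove_eq hx
        rw [himg, hσ]

theorem NN_rec (n k : ℕ) (hk : k ≤ n) : NN (n+1) k = NN (n+1) (k+1) + NN n k := by
  rw [← NN_fix n k hk]
  set p : Fin (n+1) := ⟨k, Nat.lt_succ_of_le hk⟩ with hp
  unfold NN
  rw [← Finset.card_filter_add_card_filter_not (fun π : Equiv.Perm (Fin (n+1)) => π p ≠ p)]
  congr 1
  · congr 1
    ext π
    simp only [Finset.mem_filter, Finset.mem_univ, true_and]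
    constructor
    · rintro ⟨h1, h2⟩ i hi
      rcases Nat.lt_succ_iff_lt_or_eq.mp hi with h | h
      · exact h1 i h
      · have : i = p := Fin.ext h
        rw [this]; exact h2
    · intro h
      exact ⟨fun i hi => h i (by omega), h p (by simp [hp])⟩
  · congr 1
    ext π
    simp

theorem NN_sum (n m : ℕ) (hm : m ≤ n + 1) :
    ∑ k ∈ Finset.range m, NN n k + NN (n+1) m = (n+1).factorial := by
  induction m with
  | zero => simp [NN_zero]
  | succ m ih =>
    rw [Finset.sum_range_succ, ← ih (by omega), NN_rec n m (by omega)]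
    ring

theorem perm_count (n : ℕ) (π : Equiv.Perm (Fin n)) :
    ∑ k ∈ Finset.range n, (if ∀ i : Fin n, (i : ℕ) < k → π i ≠ i then 1 else 0)
      = (if hasFP π then sfp π else 0) + n * (if ∀ i : Fin n, (i : ℕ) < n → π i ≠ i then 1 else 0) := by
  by_cases h : hasFP π
  · have hne : (fixVals π).Nonempty := by
      obtain ⟨i, hi⟩ := h
      exact ⟨_, i, hi, rfl⟩
    obtain ⟨i, hi, his⟩ := Nat.sInf_mem hne
    have hmin : ∀ j : Fin n, π j = j → (i : ℕ) ≤ j := by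
      intro j hj
      have : sInf (fixVals π) ≤ j + 1 := Nat.sInf_le ⟨j, hj, rfl⟩
      omega
    have hs : sfp π = i + 1 := his.symm
    have hnot : ¬ ∀ i : Fin n, (i : ℕ) < n → π i ≠ i := fun h' => h' i i.2 hi
    rw [if_pos h, if_neg hnot, hs, ← Finset.card_filter]
    have : (Finset.range n).filter (fun k => ∀ i : Fin n, (i : ℕ) < k → π i ≠ i)
        = Finset.range (i + 1) := by
      ext k
      simp only [Finset.mem_filter, Finset.mem_range]
      constructor
      · rintro ⟨_, h2⟩
        by_contra hk
        exact h2 i (by omega) hi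
      · intro hk
        refine ⟨by omega, fun j hj hjj => ?_⟩
        have := hmin j hjj
        omega
    rw [this]
    simp
  · have h' : ∀ i, π i ≠ i := fun i hi => h ⟨i, hi⟩
    simp [h, h']

theorem beta_eq_s14 (n : ℕ) :
    beta n + (n + 1) * numDerangements n + numDerangements (n+1) = (n+1).factorial := by
  have h1 : ∑ k ∈ Finset.range n, NN n k = beta n + n * NN n n := by
    unfold beta NN
    simp only [Finset.card_filter]
    rw [Finset.sum_comm, Finset.sum_filter, Finset.mul_sum, ← Finset.sum_add_distrib]
    exact Finset.sum_congr rfl (fun π _ => perm_count n π)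
  have h2 := NN_sum n (n+1) le_rfl
  rw [Finset.sum_range_succ, h1, NN_self, NN_self] at h2
  rw [← h2]; ring

theorem stmt14 :
    Filter.Tendsto (fun n : ℕ => (beta n : ℝ) / (n + 1).factorial) Filter.atTop
      (nhds (1 - 2 / Real.exp 1)) := by
  have h1 := numDerangements_tendsto_inv_e
  have h2 := h1.comp (Filter.tendsto_add_atTop_nat 1)
  have h3 := ((tendsto_const_nhds (x := (1:ℝ))).sub h1).sub h2
  have e : (1:ℝ) - 2 / Real.exp 1 = 1 - Real.exp (-1) - Real.exp (-1) := by
    rw [Real.exp_neg]; ring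
  rw [e]
  refine h3.congr (fun n => ?_)
  have hb : (beta n : ℝ) + (n + 1) * numDerangements n + numDerangements (n+1)
      = (n+1).factorial := by exact_mod_cast beta_eq_s14 n
  have hn : (n.factorial : ℝ) ≠ 0 := by positivity
  have hf : ((n+1).factorial : ℝ) = (n+1) * n.factorial := by
    rw [Nat.factorial_succ]; push_cast; ring
  have hn1 : (n:ℝ) + 1 ≠ 0 := by positivity
  simp only [Function.comp]
  rw [hf] at hb ⊢
  field_simp
  linarith
end
end
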